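/- arXiv:2412.03800 — 2 statements merged into one kernel-verified Lean document; each statement's English description precedes it below -/
import Mathlib

section
/- Let T ≥ 1 be a natural number, let S be a type, let J be a nonempty finite index set, and for each j ∈ J let τ_j : Fin T → S be an injective function (an episode of length T with pairwise distinct states) and H_j ∈ ℝ its episodic entropy value. Define the loss L̃(r) = Σ_{j∈J} Σ_{t<T} (H_j − T·r(τ_j(t)))² for r : S → ℝ. Define r* : S → ℝ by r*(s) = (Σ_{j : s ∈ range τ_j} H_j) / (T · |{j ∈ J : s ∈ range τ_j}|) whenever the set {j ∈ J : s ∈ range τ_j} is nonempty, and r*(s) = 0 otherwise. Then for every r : S → ℝ, L̃(r*) ≤ L̃(r); moreover any r with L̃(r) = L̃(r*) agrees with r* at every state s that lies in the range of some τ_j. -/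
open Classical in
/-- Summing along injective episodes is summing over visited states, and for each visited state over
the episodes that visit it. -/
theorem sum_episodes_eq_sum_states {S J ι M : Type*} [Fintype J] [Fintype ι] [AddCommMonoid M]
    (τ : J → ι → S) (hτ : ∀ j, Function.Injective (τ j)) (F : J → S → M) :
    ∑ j, ∑ t, F j (τ j t) =
      ∑ s ∈ Finset.univ.biUnion fun j => Finset.univ.image (τ j),
        ∑ j ∈ Finset.univ.filter (fun j => s ∈ Set.range (τ j)), F j s := by
  rw [Finset.sum_comm' (t' := Finset.univ) (s' := fun j => Finset.univ.image (τ j))]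
  · exact Finset.sum_congr rfl fun j _ => (Finset.sum_image (hτ j).injOn).symm
  · intro s j
    simp only [Finset.mem_biUnion, Finset.mem_filter, Finset.mem_image, Finset.mem_univ,
      Set.mem_range, true_and, and_true]
    exact ⟨fun h => h.2, fun h => ⟨⟨j, h⟩, h⟩⟩

/-- The squared loss splits around a point whose residuals are orthogonal to the displacement. -/
theorem sum_sq_sub_eq_add_of_orthogonal {J ι : Type*} [Fintype J] [Fintype ι]
    (h a b : J → ι → ℝ)
    (horth : ∑ j, ∑ t, (h j t - a j t) * (a j t - b j t) = 0) :
    ∑ j, ∑ t, (h j t - b j t) ^ 2 =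
      ∑ j, ∑ t, (h j t - a j t) ^ 2 + ∑ j, ∑ t, (a j t - b j t) ^ 2 := by
  have hexp : ∀ j t, (h j t - b j t) ^ 2 =
      (h j t - a j t) ^ 2 + (a j t - b j t) ^ 2 + 2 * ((h j t - a j t) * (a j t - b j t)) :=
    fun j t => by ring
  simp only [hexp, Finset.sum_add_distrib, ← Finset.mul_sum, horth, mul_zero, add_zero]

open Classical in
/-- Proposition 1 (optimal episodic intrinsic reward). For episodes `τ_j : Fin T → S`
(each injective, i.e. with pairwise distinct states) with entropy values `H_j`, the loss
`L̃(r) = Σ_j Σ_{t<T} (H_j − T·r(τ_j(t)))²` is minimized by the average episodic state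
entropy `r*(s) = (Σ_{j : s ∈ range τ_j} H_j)/(T·|{j : s ∈ range τ_j}|)` (and `r*(s) = 0`
for states in no episode); moreover any minimizer agrees with `r*` on every state that
lies in the range of some episode. -/
theorem optimal_episodic_reward {S : Type*} {J : Type*} [Fintype J] [Nonempty J]
    (T : ℕ) (hT : 1 ≤ T)
    (τ : J → Fin T → S) (hτ : ∀ j, Function.Injective (τ j))
    (H : J → ℝ)
    (L : (S → ℝ) → ℝ)
    (hL : ∀ r : S → ℝ, L r = ∑ j : J, ∑ t : Fin T, (H j - (T : ℝ) * r (τ j t)) ^ 2)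
    (rStar : S → ℝ)
    (hrStar : ∀ s : S,
      rStar s =
        if (Finset.univ.filter (fun j : J => s ∈ Set.range (τ j))).Nonempty then
          (∑ j ∈ Finset.univ.filter (fun j : J => s ∈ Set.range (τ j)), H j) /
            ((T : ℝ) * (Finset.univ.filter (fun j : J => s ∈ Set.range (τ j))).card)
        else 0) :
    (∀ r : S → ℝ, L rStar ≤ L r) ∧
    (∀ r : S → ℝ, L r = L rStar →
      ∀ s : S, (∃ j : J, s ∈ Set.range (τ j)) → r s = rStar s) := by
  have hT0 : (T : ℝ) ≠ 0 := by exact_mod_cast (Nat.one_le_iff_ne_zero.mp hT)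
  have hstat : ∀ s, ∑ j ∈ Finset.univ.filter (fun j : J => s ∈ Set.range (τ j)),
      (H j - (T : ℝ) * rStar s) = 0 := by
    intro s
    by_cases hs : (Finset.univ.filter (fun j : J => s ∈ Set.range (τ j))).Nonempty
    · have hcard : ((Finset.univ.filter (fun j : J => s ∈ Set.range (τ j))).card : ℝ) ≠ 0 :=
        Nat.cast_ne_zero.mpr hs.card_ne_zero
      rw [Finset.sum_sub_distrib, Finset.sum_const, nsmul_eq_mul, hrStar s, if_pos hs]
      field_simp
      ring
    · rw [Finset.not_nonempty_iff_eq_empty.mp hs, Finset.sum_empty]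
  have hsplit : ∀ r : S → ℝ, L r = L rStar +
      ∑ j : J, ∑ t : Fin T, ((T : ℝ) * rStar (τ j t) - (T : ℝ) * r (τ j t)) ^ 2 := by
    intro r
    rw [hL r, hL rStar]
    apply sum_sq_sub_eq_add_of_orthogonal (fun j _ => H j)
    rw [sum_episodes_eq_sum_states τ hτ
      (fun j s => (H j - (T : ℝ) * rStar s) * ((T : ℝ) * rStar s - (T : ℝ) * r s))]
    refine Finset.sum_eq_zero fun s _ => ?_
    rw [← Finset.sum_mul, hstat s, zero_mul]
  refine ⟨fun r => ?_, ?_⟩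
  · rw [hsplit r]
    exact le_add_of_nonneg_right
      (Finset.sum_nonneg fun j _ => Finset.sum_nonneg fun t _ => sq_nonneg _)
  · rintro r hr _ ⟨j, t, rfl⟩
    have hzero := left_eq_add.mp (hr.symm.trans (hsplit r))
    rw [Finset.sum_eq_zero_iff_of_nonneg
      fun j _ => Finset.sum_nonneg fun t _ => sq_nonneg _] at hzero
    have hj := hzero j (Finset.mem_univ j)
    rw [Finset.sum_eq_zero_iff_of_nonneg fun t _ => sq_nonneg _] at hj
    have hjt := sub_eq_zero.mp (pow_eq_zero_iff two_ne_zero |>.mp (hj t (Finset.mem_univ t)))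
    exact (mul_left_cancel₀ hT0 hjt).symm
end

section
/- Let σ > 0, ε > 0, and s_1, …, s_N ∈ ℝ^d with N ≥ 1. For each i ∈ {1,…,N} let A_i ⊆ {1,…,N} be a nonempty set of indices (the k nearest neighbors of s_i, together with i itself), and suppose that for every j ∉ A_i one has ‖s_i − s_j‖ ≥ √(2σ·log(|A_iᶜ|/ε)). Then, with κ_σ(x, y) = exp(−‖x − y‖²/(2σ)) and H_KDE := log N − (1/N)·Σ_{i=1}^N log(Σ_{j=1}^N κ_σ(s_i, s_j)), one has log N − (1/N)·Σ_{i=1}^N log( ε + Σ_{j∈A_i} κ_σ(s_i, s_j) ) ≤ H_KDE ≤ log N − (1/N)·Σ_{i=1}^N log( Σ_{j∈A_i} κ_σ(s_i, s_j) ). -/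
/-- A Gaussian at distance at least `√(2σ·log(m/ε))` is at most `ε/m`. -/
lemma exp_neg_sq_div_le_of_sqrt_log_le {σ ε m r : ℝ} (hσ : 0 < σ) (hε : 0 < ε) (hm : 0 < m)
    (h : Real.sqrt (2 * σ * Real.log (m / ε)) ≤ r) :
    Real.exp (-r ^ 2 / (2 * σ)) ≤ ε / m := by
  rw [← Real.le_log_iff_exp_le (by positivity), ← inv_div m ε, Real.log_inv, neg_div, neg_le_neg_iff,
    le_div_iff₀ (by positivity), mul_comm]
  exact (Real.sqrt_le_iff.mp h).2

/-- If each term outside `A` is at most `ε/|Aᶜ|`, the full sum exceeds the sum over `A`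
by at most `ε`. -/
lemma sum_univ_le_add_sum_of_le_div_card_compl {ι : Type*} [Fintype ι] [DecidableEq ι]
    (A : Finset ι) (f : ι → ℝ) {ε : ℝ} (hε : 0 ≤ ε) (hf : ∀ j ∉ A, f j ≤ ε / (Aᶜ.card : ℝ)) :
    ∑ j, f j ≤ ε + ∑ j ∈ A, f j := by
  rw [← Finset.sum_compl_add_sum A f]
  gcongr
  calc ∑ j ∈ Aᶜ, f j ≤ Aᶜ.card • (ε / (Aᶜ.card : ℝ)) :=
        Finset.sum_le_card_nsmul _ _ _ fun j hj => hf j (Finset.mem_compl.mp hj)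
    _ ≤ ε := by
        rw [nsmul_eq_mul]
        rcases eq_or_ne (Aᶜ.card : ℝ) 0 with h | h
        · simpa [h] using hε
        · exact (mul_div_cancel₀ ε h).le

/-- Sandwich bound for the Gaussian KDE entropy estimator: if for each `i` every
non-neighbor `j ∉ A i` satisfies `‖s_i − s_j‖ ≥ √(2σ·log(|A_iᶜ|/ε))`, then
`H_KDE = log N − (1/N)·Σ_i log(Σ_j κ_σ(s_i, s_j))` is sandwiched between the
`k`-nearest-neighbor truncations of the kernel sums, up to tolerance `ε`. -/
theorem kde_entropy_knn_sandwich {d : ℕ} (σ ε : ℝ) (hσ : 0 < σ) (hε : 0 < ε)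
    (N : ℕ) (hN : 1 ≤ N) (s : Fin N → EuclideanSpace ℝ (Fin d))
    (A : Fin N → Finset (Fin N)) (hA : ∀ i, (A i).Nonempty)
    (hdist : ∀ i, ∀ j ∉ A i,
      Real.sqrt (2 * σ * Real.log (((A i)ᶜ.card : ℝ) / ε)) ≤ ‖s i - s j‖) :
    Real.log N -
        (1 / (N : ℝ)) *
          ∑ i, Real.log (ε + ∑ j ∈ A i, Real.exp (-‖s i - s j‖ ^ 2 / (2 * σ))) ≤
      Real.log N -
        (1 / (N : ℝ)) * ∑ i, Real.log (∑ j, Real.exp (-‖s i - s j‖ ^ 2 / (2 * σ))) ∧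
    Real.log N -
        (1 / (N : ℝ)) * ∑ i, Real.log (∑ j, Real.exp (-‖s i - s j‖ ^ 2 / (2 * σ))) ≤
      Real.log N -
        (1 / (N : ℝ)) *
          ∑ i, Real.log (∑ j ∈ A i, Real.exp (-‖s i - s j‖ ^ 2 / (2 * σ))) := by
  constructor
  · gcongr with i
    · exact Finset.sum_pos (fun j _ => Real.exp_pos _) ((hA i).mono (Finset.subset_univ _))
    · refine sum_univ_le_add_sum_of_le_div_card_compl (A i) _ hε.le fun j hj => ?_
      have hcard : 0 < (A i)ᶜ.card := Finset.card_pos.mpr ⟨j, Finset.mem_compl.mpr hj⟩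
      exact exp_neg_sq_div_le_of_sqrt_log_le hσ hε (by exact_mod_cast hcard) (hdist i j hj)
  · gcongr with i
    exact Finset.subset_univ _
end
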